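/- For every n ≥ 0 and every finite set s with |s| = n + 1, Σ_{P partition of s} (|P|-1)! ≤ n! · e^{n+2}, where the sum runs over all partitions P of s and |P| is the number of blocks of P. Equivalently, Σ_{k=1}^{n+1} S(n+1,k) (k-1)! ≤ n! e^{n+2}, where S(n+1,k) is the number of partitions of an (n+1)-element set into exactly k blocks. -/

import Mathlib

/-!
A partition of an `(n+1)`-element set `s` into `k` blocks together with a labelling of its blocks by
`Fin k` amounts to a surjection `s → Fin k`, so the number `S` of partitions into `k` blocks
satisfies `S * k! ≤ k ^ (n + 1)` (`card_partitions_mul_factorial_le`), that is,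
`S * (k - 1)! ≤ k ^ n`. The series of the exponential function gives `k ^ n ≤ n! * e ^ k`, and
summing over `1 ≤ k ≤ n + 1` leaves a geometric sum which is at most `e ^ (n + 2)` because `2 ≤ e`.
-/

open Finset Nat

/-- The function on `s` that sends an element to the label of the block containing it. -/
def blockLabel {α : Type*} [DecidableEq α] {s : Finset α} {k : ℕ}
    (P : Finpartition s) (σ : P.parts ≃ Fin k) (x : s) : Fin k :=
  σ ⟨P.part x.1, P.part_mem.2 x.2⟩

lemma blockLabel_eq_iff {α : Type*} [DecidableEq α] {s : Finset α} {k : ℕ}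
    (P : Finpartition s) (σ : P.parts ≃ Fin k) (x y : s) :
    blockLabel P σ x = blockLabel P σ y ↔ x.1 ∈ P.part y.1 := by
  rw [P.mem_part_iff_part_eq_part x.2 y.2]
  simp [blockLabel]

/-- A block is the set of elements sharing the label of any one of its members, so the labelling
function determines every block. -/
lemma parts_subset_of_blockLabel_eq {α : Type*} [DecidableEq α] {s : Finset α} {k : ℕ}
    {P Q : Finpartition s} {σ : P.parts ≃ Fin k} {τ : Q.parts ≃ Fin k}
    (h : blockLabel P σ = blockLabel Q τ) : P.parts ⊆ Q.parts := by
  intro p hp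
  obtain ⟨y, hy⟩ := P.nonempty_of_mem_parts hp
  have hys : y ∈ s := P.subset hp hy
  have hpQ : p = Q.part y := by
    rw [← P.part_eq_of_mem hp hy]
    ext x
    by_cases hx : x ∈ s
    · have h1 := blockLabel_eq_iff P σ ⟨x, hx⟩ ⟨y, hys⟩
      have h2 := blockLabel_eq_iff Q τ ⟨x, hx⟩ ⟨y, hys⟩
      rw [h] at h1
      exact h1.symm.trans h2
    · exact iff_of_false (fun hm => hx (P.part_subset y hm)) (fun hm => hx (Q.part_subset y hm))
  rw [hpQ]
  exact Q.part_mem.2 hys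

/-- Partitions into `k` blocks with labelled blocks inject into the functions `s → Fin k`. -/
lemma card_partitions_mul_factorial_le {α : Type*} [DecidableEq α] (s : Finset α) (k : ℕ) :
    #{P : Finpartition s | #P.parts = k} * k ! ≤ k ^ #s := by
  let T := Σ P : {P : Finpartition s // #P.parts = k}, (P.1.parts ≃ Fin k)
  have hT : Fintype.card T = #{P : Finpartition s | #P.parts = k} * k ! := by
    have hfib (P : {P : Finpartition s // #P.parts = k}) :
        Fintype.card (P.1.parts ≃ Fin k) = k ! := by
      rw [Fintype.card_equiv (P.1.parts.equivFinOfCardEq P.2)]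
      simp [P.2]
    rw [Fintype.card_sigma, Finset.sum_congr rfl fun P _ => hfib P]
    simp [Fintype.card_subtype]
  have hinj : Function.Injective (fun t : T => blockLabel t.1.1 t.2) := by
    rintro ⟨⟨P, hP⟩, σ⟩ ⟨⟨Q, hQ⟩, τ⟩ h
    have hPQ : P = Q := Finpartition.ext
      ((parts_subset_of_blockLabel_eq h).antisymm (parts_subset_of_blockLabel_eq h.symm))
    subst hPQ
    have hστ : σ = τ := by
      ext1 ⟨p, hp⟩
      obtain ⟨y, hy⟩ := P.nonempty_of_mem_parts hp
      have hl := congrFun h ⟨y, P.subset hp hy⟩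
      simpa only [blockLabel, P.part_eq_of_mem hp hy] using hl
    rw [hστ]
  simpa [hT] using Fintype.card_le_of_injective _ hinj

lemma sum_partitions_le_sum_pow {α : Type*} [DecidableEq α]
    (n : ℕ) (s : Finset α) (hs : s.card = n + 1) :
    ∑ P : Finpartition s, (P.parts.card - 1)! ≤ ∑ j ∈ range (n + 1), (j + 1) ^ n := by
  have hmaps : ∀ P ∈ (univ : Finset (Finpartition s)), #P.parts - 1 ∈ range (n + 1) := by
    intro P _
    have := P.card_parts_le_card
    rw [mem_range]
    omega
  rw [← Finset.sum_fiberwise_of_maps_to hmaps]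
  refine Finset.sum_le_sum fun j _ => ?_
  have hfib : univ.filter (fun P : Finpartition s => #P.parts - 1 = j) =
      univ.filter (fun P : Finpartition s => #P.parts = j + 1) := by
    ext P
    have hpos : 0 < #P.parts :=
      card_pos.2 (P.parts_nonempty (by rintro rfl; simp at hs))
    simp only [mem_filter, mem_univ, true_and]
    omega
  rw [Finset.sum_congr rfl (g := fun _ => j !) (fun P hP => by rw [(mem_filter.1 hP).2]), hfib,
    sum_const, smul_eq_mul]
  have h := card_partitions_mul_factorial_le s (j + 1)
  rw [hs, pow_succ, Nat.factorial_succ] at h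
  refine Nat.le_of_mul_le_mul_right (c := j + 1) ?_ (Nat.succ_pos j)
  linarith

/-- The geometric sum of `x + ⋯ + x ^ m` is dominated by its next term once `2 ≤ x`. -/
lemma sum_pow_succ_le {x : ℝ} (hx : 2 ≤ x) (m : ℕ) :
    ∑ j ∈ range m, x ^ (j + 1) ≤ x ^ (m + 1) := by
  induction m with
  | zero => simp; linarith
  | succ m ih =>
    rw [sum_range_succ, pow_succ x (m + 1)]
    have : 0 ≤ x ^ (m + 1) := by positivity
    nlinarith

/-- For every `n ≥ 0` and every finite set `s` with `|s| = n + 1`,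
`∑_{P partition of s} (|P|-1)! ≤ n! · e^{n+2}`. -/
theorem sum_partitions_factorial_le {α : Type*} [DecidableEq α]
    (n : ℕ) (s : Finset α) (hs : s.card = n + 1) :
    ((∑ P : Finpartition s, (P.parts.card - 1)! : ℕ) : ℝ) ≤
      (n ! : ℝ) * Real.exp 1 ^ (n + 2) := by
  have hpow (j : ℕ) : ((j : ℝ) + 1) ^ n ≤ n ! * Real.exp 1 ^ (j + 1) := by
    have h := Real.pow_div_factorial_le_exp (x := (j : ℝ) + 1) (by positivity) n
    rw [div_le_iff₀ (by positivity)] at h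
    rw [← Real.exp_nat_mul]
    push_cast
    rw [mul_one]
    linarith
  calc ((∑ P : Finpartition s, (P.parts.card - 1)! : ℕ) : ℝ)
      ≤ ((∑ j ∈ range (n + 1), (j + 1) ^ n : ℕ) : ℝ) := by
        exact_mod_cast sum_partitions_le_sum_pow n s hs
    _ = ∑ j ∈ range (n + 1), ((j : ℝ) + 1) ^ n := by push_cast; rfl
    _ ≤ ∑ j ∈ range (n + 1), n ! * Real.exp 1 ^ (j + 1) := Finset.sum_le_sum fun j _ => hpow j
    _ = n ! * ∑ j ∈ range (n + 1), Real.exp 1 ^ (j + 1) := by rw [mul_sum]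
    _ ≤ n ! * Real.exp 1 ^ (n + 2) := by
        gcongr
        exact sum_pow_succ_le Real.exp_one_gt_two.le (n + 1)
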